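/- arXiv:2310.17229 — 2 statements merged into one kernel-verified Lean document; each statement's English description precedes it below -/
import Mathlib

section
/- (Main theorem, characterization of the exactness cone.) Assume X is nonempty and compact. For every f ∈ ℝ[x]_d, f belongs to the exactness cone F(g)^r_d if and only if there exists x̂ ∈ X such that f(x̂) = v(f) and f − f(x̂) ∈ Q(g)^r_d. In other words, F(g)^r_d is the set of polynomials of the form v(f) + f⁰ where f⁰ ∈ Q(g)^r_d vanishes at some point x̂ ∈ X (which is then a global minimizer of f on X). -/
open MvPolynomial

/-- A multivariate polynomial is a sum of squares (SOS). -/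
def IsSOS {n : ℕ} (p : MvPolynomial (Fin n) ℝ) : Prop :=
  ∃ (k : ℕ) (q : Fin k → MvPolynomial (Fin n) ℝ), p = ∑ i, (q i) ^ 2

/-- The extended family of constraint polynomials, with `g₀ := 1`. -/
noncomputable def gext {n m : ℕ} (g : Fin m → MvPolynomial (Fin n) ℝ) : Fin (m + 1) → MvPolynomial (Fin n) ℝ :=
  Fin.cons 1 g

/-- The truncated quadratic module `Q(g)^r_d`, with `g₀ := 1`. -/
def Qmod {n m : ℕ} (g : Fin m → MvPolynomial (Fin n) ℝ) (r d : ℕ) :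
    Set (MvPolynomial (Fin n) ℝ) :=
  {p | p.totalDegree ≤ d ∧
    ∃ s : Fin (m + 1) → MvPolynomial (Fin n) ℝ,
      (∀ i, IsSOS (s i)) ∧
      (∀ i, (s i * gext g i).totalDegree ≤ 2 * r) ∧
      p = ∑ i, s i * gext g i}

/-- The basic semialgebraic set `X = {x ∈ ℝⁿ : gᵢ(x) ≥ 0, i = 1,…,m}`. -/
def semiSetX {n m : ℕ} (g : Fin m → MvPolynomial (Fin n) ℝ) : Set (Fin n → ℝ) :=
  {x | ∀ i, 0 ≤ eval x (g i)}

/-- The moment relaxation `R(g)^r_d`: linear functionals nonnegative on `Q(g)^r_d`. -/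
def Rmom {n m : ℕ} (g : Fin m → MvPolynomial (Fin n) ℝ) (r d : ℕ) :
    Set (MvPolynomial (Fin n) ℝ →ₗ[ℝ] ℝ) :=
  {ℓ | ∀ q ∈ Qmod g r d, 0 ≤ ℓ q}

/-- The optimal value `v(f) = inf_{x ∈ X} f(x)` of the POP. -/
noncomputable def vPOP {n m : ℕ} (g : Fin m → MvPolynomial (Fin n) ℝ)
    (f : MvPolynomial (Fin n) ℝ) : ℝ :=
  sInf ((fun x => eval x f) '' semiSetX g)

/-- The relaxed value `v^r(f) = sup {v : f - v ∈ Q(g)^r_d}`. -/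
noncomputable def vRel {n m : ℕ} (g : Fin m → MvPolynomial (Fin n) ℝ) (r d : ℕ)
    (f : MvPolynomial (Fin n) ℝ) : ℝ :=
  sSup {w : ℝ | f - C w ∈ Qmod g r d}

/-- The exactness cone `F(g)^r_d`. -/
def Fcone {n m : ℕ} (g : Fin m → MvPolynomial (Fin n) ℝ) (r d : ℕ) :
    Set (MvPolynomial (Fin n) ℝ) :=
  {f | f.totalDegree ≤ d ∧
    ∃ ℓ ∈ Rmom g r d, ∃ v : ℝ,
      ℓ 1 = 1 ∧ ℓ f = v ∧ v = vPOP g f ∧ f - C v ∈ Qmod g r d}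

/-!
Elements of `Q(g)^r_d` are nonnegative on `X`, so evaluation at a point `x ∈ X` belongs to the
moment relaxation, and `f - f(x) ∈ Q(g)^r_d` forces `x` to minimize `f` over `X`. Evaluation at
such a point is then the functional `ℓ` required by the exactness cone. Conversely, once `f`
attains its minimum over `X`, as it does when `X` is compact, any minimizer is the desired point.
-/

theorem totalDegree_le_totalDegree_sub_C {σ R : Type*} [CommRing R]
    (p : MvPolynomial σ R) (a : R) : p.totalDegree ≤ (p - C a).totalDegree :=
  calc p.totalDegree = (p - C a - C (-a)).totalDegree := by
        rw [C_neg, sub_neg_eq_add, sub_add_cancel]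
    _ ≤ (p - C a).totalDegree := totalDegree_sub_C_le _ _

section Exactness

variable {n m : ℕ} {g : Fin m → MvPolynomial (Fin n) ℝ} {r d : ℕ}
  {f p : MvPolynomial (Fin n) ℝ} {x : Fin n → ℝ}

theorem IsSOS.eval_nonneg (hp : IsSOS p) (x : Fin n → ℝ) : 0 ≤ eval x p := by
  obtain ⟨k, q, rfl⟩ := hp
  simp only [map_sum, map_pow]
  exact Finset.sum_nonneg fun i _ => sq_nonneg _

theorem eval_gext_nonneg (hx : x ∈ semiSetX g) (i : Fin (m + 1)) : 0 ≤ eval x (gext g i) := by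
  cases i using Fin.cases with
  | zero => simp [gext]
  | succ j => simpa [gext] using hx j

theorem eval_nonneg_of_mem_Qmod (hp : p ∈ Qmod g r d) (hx : x ∈ semiSetX g) :
    0 ≤ eval x p := by
  obtain ⟨-, s, hs, -, rfl⟩ := hp
  simp only [map_sum, map_mul]
  exact Finset.sum_nonneg fun i _ => mul_nonneg ((hs i).eval_nonneg x) (eval_gext_nonneg hx i)

theorem aeval_toLinearMap_mem_Rmom (hx : x ∈ semiSetX g) (r d : ℕ) :
    (aeval x).toLinearMap ∈ Rmom g r d :=
  fun _ hq => eval_nonneg_of_mem_Qmod hq hx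

theorem vPOP_eq_eval_of_isMinOn (hx : x ∈ semiSetX g)
    (hmin : IsMinOn (fun y => eval y f) (semiSetX g) x) : vPOP g f = eval x f :=
  IsLeast.csInf_eq ⟨Set.mem_image_of_mem _ hx, Set.forall_mem_image.2 hmin⟩

theorem isMinOn_of_sub_C_mem_Qmod (hQ : f - C (eval x f) ∈ Qmod g r d) :
    IsMinOn (fun y => eval y f) (semiSetX g) x := by
  intro y hy
  simpa using eval_nonneg_of_mem_Qmod hQ hy

theorem sub_C_vPOP_mem_Qmod_of_mem_Fcone (hf : f ∈ Fcone g r d) :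
    f - C (vPOP g f) ∈ Qmod g r d := by
  obtain ⟨-, _, -, _, -, -, rfl, hQ⟩ := hf
  exact hQ

theorem mem_Fcone_of_sub_C_mem_Qmod (hx : x ∈ semiSetX g)
    (hQ : f - C (eval x f) ∈ Qmod g r d) : f ∈ Fcone g r d := by
  have hdeg : f.totalDegree ≤ d := (totalDegree_le_totalDegree_sub_C f _).trans hQ.1
  have hval : vPOP g f = eval x f := vPOP_eq_eval_of_isMinOn hx (isMinOn_of_sub_C_mem_Qmod hQ)
  exact ⟨hdeg, (aeval x).toLinearMap, aeval_toLinearMap_mem_Rmom hx r d, eval x f,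
    map_one (aeval x), rfl, hval.symm, hQ⟩

end Exactness

theorem stmt4_general {n m : ℕ} (g : Fin m → MvPolynomial (Fin n) ℝ) (r d : ℕ)
    (f : MvPolynomial (Fin n) ℝ)
    (hmin : ∃ x ∈ semiSetX g, IsMinOn (fun y => eval y f) (semiSetX g) x) :
    f ∈ Fcone g r d ↔
      ∃ xhat ∈ semiSetX g,
        eval xhat f = vPOP g f ∧ f - C (eval xhat f) ∈ Qmod g r d := by
  constructor
  · intro hf
    obtain ⟨x, hx, hxmin⟩ := hmin
    have hval : vPOP g f = eval x f := vPOP_eq_eval_of_isMinOn hx hxmin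
    exact ⟨x, hx, hval.symm, hval ▸ sub_C_vPOP_mem_Qmod_of_mem_Fcone hf⟩
  · rintro ⟨x, hx, -, hQ⟩
    exact mem_Fcone_of_sub_C_mem_Qmod hx hQ

/-- Main theorem: for `X` nonempty and compact, a polynomial
`f ∈ ℝ[x]_d` belongs to the exactness cone `F(g)^r_d` if and only if there is a point
`xhat ∈ X` with `f(xhat) = v(f)` (a global minimizer) such that `f - f(xhat) ∈ Q(g)^r_d`. -/
theorem stmt4 {n m : ℕ} (g : Fin m → MvPolynomial (Fin n) ℝ) (r d : ℕ)
    (hXne : (semiSetX g).Nonempty) (hXc : IsCompact (semiSetX g))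
    (f : MvPolynomial (Fin n) ℝ) (hf : f.totalDegree ≤ d) :
    f ∈ Fcone g r d ↔
      ∃ xhat ∈ semiSetX g,
        eval xhat f = vPOP g f ∧ f - C (eval xhat f) ∈ Qmod g r d :=
  stmt4_general g r d f (hXc.exists_isMinOn hXne (continuous_eval f).continuousOn)
end

section
/- (Asymptotic exactness of the relaxation values.) Assume X is nonempty and the Archimedean condition holds: there exist R ∈ ℝ and r₀ ∈ ℕ such that R² − Σ_{k=1}^n x_k² ∈ Q(g)^{r₀}_2. Then for every f ∈ ℝ[x]_d and every ε > 0 there exists a relaxation order r such that f − (v(f) − ε) ∈ Q(g)^r_d; equivalently, sup_r v^r(f) = v(f). -/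
open MvPolynomial

/-!
The degree bounds only record which finitely many multipliers occur, so the claim is Putinar's
Positivstellensatz: a polynomial that is positive on `X` lies in the quadratic module `Q(g)`. In
Jacobi's form, an Archimedean quadratic module `M` of a commutative `ℝ`-algebra `A` contains every
`f` that is positive under all homomorphisms `A → ℝ` that are nonnegative on `M`.

If `f ∉ M`, then the quadratic module generated by `M` and `-f` does not contain `-1`: otherwise
`t f - 1 ∈ M` for a sum of squares `t`, and multiplying `f + r ∈ M` by `(k - t)²`, for a constant
`k` that is large compared with `t` and `t² f`, lowers `r` by the fixed amount `k⁻²`, until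
`f ∈ M`. By Zorn's lemma this larger module lies in a maximal one avoiding `-1`. A maximal one is
total (it contains `a` or `-a` for every `a`), and its infinitesimals form an ideal with quotient
`ℝ`, since every `a` differs infinitesimally from the infimum of its real upper bounds. The
quotient map is nonnegative on `M` and nonpositive at `f`, a contradiction.
-/

/-- A quadratic module of a commutative ring `A`: a set containing `1` and closed under addition and
under multiplication by squares. These are the submodules of `A` over the semiring of sums of
squares that contain `1`. -/
structure IsQuadraticModule {A : Type*} [CommRing A] (M : Submodule (Subsemiring.sumSq A) A) :
    Prop where
  one_mem : 1 ∈ M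

/-- An Archimedean quadratic module of a commutative `ℝ`-algebra: in the preorder `a ≤ b` given by
`b - a ∈ M`, every element is bounded above by a real constant. -/
structure IsArchimedeanQuadraticModule {A : Type*} [CommRing A] [Algebra ℝ A]
    (M : Submodule (Subsemiring.sumSq A) A) : Prop extends IsQuadraticModule M where
  exists_algebraMap_sub_mem (a : A) : ∃ N : ℝ, algebraMap ℝ A N - a ∈ M

lemma exists_maximal_notMem {R E : Type*} [Semiring R] [AddCommMonoid E] [Module R E]
    {N : Submodule R E} {x : E} (hx : x ∉ N) :
    ∃ P, N ≤ P ∧ Maximal (fun P : Submodule R E => x ∉ P) P := by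
  refine zorn_le_nonempty₀ {P | x ∉ P} (fun c hc hchain Q hQ => ?_) N hx
  refine ⟨sSup c, fun hmem => ?_, fun P hP => le_sSup hP⟩
  obtain ⟨P, hP, hxP⟩ := (Submodule.mem_sSup_of_directed ⟨Q, hQ⟩ hchain.directedOn).1 hmem
  exact hc hP hxP

section Semiring

variable {A : Type*} [CommSemiring A] {M : Submodule (Subsemiring.sumSq A) A} {a b p s : A}

lemma isSumSq_mul_mem (hs : IsSumSq s) (hp : p ∈ M) : s * p ∈ M :=
  M.smul_mem ⟨s, Subsemiring.mem_sumSq.2 hs⟩ hp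

lemma sq_mul_mem (a : A) (hp : p ∈ M) : a ^ 2 * p ∈ M :=
  isSumSq_mul_mem (IsSquare.sq a).isSumSq hp

lemma mem_sup_span_singleton_iff :
    p ∈ M ⊔ Submodule.span (Subsemiring.sumSq A) {a} ↔
      ∃ q ∈ M, ∃ s, IsSumSq s ∧ q + s * a = p := by
  simp [Submodule.mem_sup, Submodule.mem_span_singleton, Subsemiring.smul_def]

lemma exists_add_mul_eq_of_maximal_notMem
    (hmax : Maximal (fun P : Submodule (Subsemiring.sumSq A) A => b ∉ P) M) (ha : a ∉ M) :
    ∃ q ∈ M, ∃ s, IsSumSq s ∧ q + s * a = b := by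
  rw [← mem_sup_span_singleton_iff]
  by_contra hcon
  have hle := hmax.le_of_ge hcon le_sup_left
  exact ha (hle (Submodule.mem_sup_right (Submodule.mem_span_singleton_self a)))

section OrderedRing

variable {R : Type*} [Ring R] [LinearOrder R] [IsStrictOrderedRing R] (φ : A →+* R)

lemma map_nonneg_of_isSumSq (hs : IsSumSq s) : 0 ≤ φ s := by
  induction hs with
  | zero => simp
  | sq_add a _ ih => simpa using add_nonneg (mul_self_nonneg (φ a)) ih

lemma map_nonneg_of_mem_span {S : Set A} (hS : ∀ a ∈ S, 0 ≤ φ a)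
    (hp : p ∈ Submodule.span (Subsemiring.sumSq A) S) : 0 ≤ φ p := by
  induction hp using Submodule.span_induction with
  | mem a ha => exact hS a ha
  | zero => simp
  | add p q _ _ hp hq => simpa using add_nonneg hp hq
  | smul s p _ hp =>
    have hs : 0 ≤ φ s := map_nonneg_of_isSumSq φ (Subsemiring.mem_sumSq.1 s.2)
    simpa [Subsemiring.smul_def] using mul_nonneg hs hp

end OrderedRing

variable [Algebra ℝ A] {r : ℝ}

lemma isSumSq_algebraMap (hr : 0 ≤ r) : IsSumSq (algebraMap ℝ A r) :=
  ((Real.isSquare_iff.2 hr).map (algebraMap ℝ A)).isSumSq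

lemma smul_mem_of_nonneg (hr : 0 ≤ r) (hp : p ∈ M) : r • p ∈ M := by
  rw [Algebra.smul_def]
  exact isSumSq_mul_mem (isSumSq_algebraMap hr) hp

lemma smul_mem_iff_of_pos (hr : 0 < r) : r • p ∈ M ↔ p ∈ M := by
  refine ⟨fun h => ?_, smul_mem_of_nonneg hr.le⟩
  simpa [smul_smul, hr.ne'] using smul_mem_of_nonneg (inv_nonneg.2 hr.le) h

end Semiring

section Ring

variable {A : Type*} [CommRing A] [Algebra ℝ A] {M : Submodule (Subsemiring.sumSq A) A} {p : A}
  {r : ℝ}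

lemma nonneg_of_algebraMap_mem (h : -1 ∉ M) (hr : algebraMap ℝ A r ∈ M) : 0 ≤ r := by
  by_contra! hneg
  refine h ((smul_mem_iff_of_pos (neg_pos.2 hneg)).1 ?_)
  simpa [Algebra.smul_def] using hr

lemma mul_mem_of_mem_of_neg_mem (hp : p ∈ M) (hnp : -p ∈ M) (a : A) : p * a ∈ M := by
  rw [← smul_mem_iff_of_pos (r := 4) four_pos]
  have h := add_mem (sq_mul_mem (a + 1) hp) (sq_mul_mem (a - 1) hnp)
  convert h using 1
  algebra

end Ring

namespace IsQuadraticModule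

variable {A : Type*} [CommRing A] {M : Submodule (Subsemiring.sumSq A) A} {a : A}

lemma mono {P : Submodule (Subsemiring.sumSq A) A} (hM : IsQuadraticModule M) (hMP : M ≤ P) :
    IsQuadraticModule P :=
  ⟨hMP hM.one_mem⟩

lemma isSumSq_mem (hM : IsQuadraticModule M) (ha : IsSumSq a) : a ∈ M := by
  simpa using isSumSq_mul_mem ha hM.one_mem

lemma sq_mem (hM : IsQuadraticModule M) (a : A) : a ^ 2 ∈ M :=
  hM.isSumSq_mem (IsSquare.sq a).isSumSq

variable [Algebra ℝ A] {r s : ℝ}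

lemma mem_or_neg_mem_of_maximal (hM : IsQuadraticModule M)
    (hmax : Maximal (fun P : Submodule (Subsemiring.sumSq A) A => -1 ∉ P) M) (a : A) :
    a ∈ M ∨ -a ∈ M := by
  by_contra! ⟨ha, hna⟩
  obtain ⟨q₁, hq₁, s₁, hs₁, e₁⟩ := exists_add_mul_eq_of_maximal_notMem hmax ha
  obtain ⟨q₂, hq₂, s₂, hs₂, e₂⟩ := exists_add_mul_eq_of_maximal_notMem hmax hna
  have hneg : -s₁ ∈ M := by
    have h := add_mem (add_mem (hM.isSumSq_mem hs₂) (isSumSq_mul_mem hs₁ hq₂))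
      (isSumSq_mul_mem hs₂ hq₁)
    convert h using 1
    linear_combination -s₁ * e₂ - s₂ * e₁
  have hmul : s₁ * a ∈ M := mul_mem_of_mem_of_neg_mem (hM.isSumSq_mem hs₁) hneg a
  exact hmax.prop (e₁ ▸ add_mem hq₁ hmul)

lemma algebraMap_mem (hM : IsQuadraticModule M) (hr : 0 ≤ r) : algebraMap ℝ A r ∈ M :=
  hM.isSumSq_mem (isSumSq_algebraMap hr)

lemma algebraMap_sub_mem_of_le (hM : IsQuadraticModule M) (hrs : r ≤ s)
    (h : algebraMap ℝ A r - a ∈ M) : algebraMap ℝ A s - a ∈ M := by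
  simpa using add_mem (hM.algebraMap_mem (sub_nonneg.2 hrs)) h

/-- The elements of `A` whose square is bounded above by a real constant modulo the quadratic
module `M`. -/
def boundedSubalgebra (hM : IsQuadraticModule M) : Subalgebra ℝ A where
  carrier := {a | ∃ N : ℝ, algebraMap ℝ A N - a ^ 2 ∈ M}
  algebraMap_mem' r := ⟨r ^ 2, by simp⟩
  add_mem' := by
    rintro a b ⟨N, ha⟩ ⟨K, hb⟩
    refine ⟨2 * N + 2 * K, ?_⟩
    have h := add_mem (smul_mem_of_nonneg two_pos.le (add_mem ha hb)) (hM.sq_mem (a - b))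
    convert h using 1
    algebra
  mul_mem' := by
    rintro a b ⟨N, ha⟩ ⟨K, hb⟩
    have hb' := hM.algebraMap_sub_mem_of_le (le_max_left K 0) hb
    refine ⟨max K 0 * N, ?_⟩
    have h := add_mem (smul_mem_of_nonneg (le_max_right K 0) ha) (sq_mul_mem a hb')
    convert h using 1
    algebra

lemma mem_boundedSubalgebra (hM : IsQuadraticModule M) :
    a ∈ hM.boundedSubalgebra ↔ ∃ N : ℝ, algebraMap ℝ A N - a ^ 2 ∈ M :=
  Iff.rfl

lemma isArchimedean_of_boundedSubalgebra_eq_top (hM : IsQuadraticModule M)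
    (h : hM.boundedSubalgebra = ⊤) : IsArchimedeanQuadraticModule M where
  one_mem := hM.one_mem
  exists_algebraMap_sub_mem a := by
    obtain ⟨N, hN⟩ := hM.mem_boundedSubalgebra.1 (h ▸ Algebra.mem_top : a ∈ hM.boundedSubalgebra)
    refine ⟨(N + 1) / 2, (smul_mem_iff_of_pos two_pos).1 ?_⟩
    convert add_mem hN (hM.sq_mem (a - 1)) using 1
    algebra

lemma isArchimedean_of_algebraMap_sub_sum_sq_mem {ι : Type*} [Fintype ι] {x : ι → A} {N : ℝ}
    (hM : IsQuadraticModule M) (hx : Algebra.adjoin ℝ (Set.range x) = ⊤)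
    (hN : algebraMap ℝ A N - ∑ i, x i ^ 2 ∈ M) : IsArchimedeanQuadraticModule M := by
  classical
  refine hM.isArchimedean_of_boundedSubalgebra_eq_top (top_unique (hx ▸ Algebra.adjoin_le ?_))
  rintro _ ⟨i, rfl⟩
  have hrest : ∑ k ∈ Finset.univ.erase i, x k ^ 2 ∈ M := sum_mem fun k _ => hM.sq_mem (x k)
  refine hM.mem_boundedSubalgebra.2 ⟨N, ?_⟩
  convert add_mem hN hrest using 1
  rw [← Finset.add_sum_erase _ _ (Finset.mem_univ i)]
  ring

end IsQuadraticModule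

namespace IsArchimedeanQuadraticModule

variable {A : Type*} [CommRing A] [Algebra ℝ A] {M : Submodule (Subsemiring.sumSq A) A}
  {a f t : A}

lemma mono {P : Submodule (Subsemiring.sumSq A) A} (hM : IsArchimedeanQuadraticModule M)
    (hMP : M ≤ P) : IsArchimedeanQuadraticModule P where
  toIsQuadraticModule := hM.toIsQuadraticModule.mono hMP
  exists_algebraMap_sub_mem a := (hM.exists_algebraMap_sub_mem a).imp fun _ h => hMP h

lemma exists_pos_algebraMap_sub_mem (hM : IsArchimedeanQuadraticModule M) (a : A) :
    ∃ N : ℝ, 0 < N ∧ algebraMap ℝ A N - a ∈ M := by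
  obtain ⟨N, hN⟩ := hM.exists_algebraMap_sub_mem a
  exact ⟨max N 1, lt_max_of_lt_right one_pos, hM.algebraMap_sub_mem_of_le (le_max_left N 1) hN⟩

lemma exists_pos_forall_add_algebraMap_sub_mem (hM : IsArchimedeanQuadraticModule M)
    (ht : IsSumSq t) (htf : t * f - 1 ∈ M) :
    ∃ δ : ℝ, 0 < δ ∧ ∀ r : ℝ, 0 ≤ r → f + algebraMap ℝ A r ∈ M →
      f + algebraMap ℝ A (r - δ) ∈ M := by
  obtain ⟨N, hN, htN⟩ := hM.exists_pos_algebraMap_sub_mem t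
  obtain ⟨K, hK, htK⟩ := hM.exists_pos_algebraMap_sub_mem (t ^ 2 * f)
  obtain ⟨k, hk, ht_le, htf_le⟩ : ∃ k : ℝ, 0 < k ∧ algebraMap ℝ A (2 * k) - t ∈ M ∧
      algebraMap ℝ A (2 * k - 1) - t ^ 2 * f ∈ M :=
    ⟨N + K + 1, by positivity, hM.algebraMap_sub_mem_of_le (by linarith) htN,
      hM.algebraMap_sub_mem_of_le (by linarith) htK⟩
  refine ⟨(k ^ 2)⁻¹, by positivity, fun r hr hfr => ?_⟩
  rw [← smul_mem_iff_of_pos (pow_pos hk 2)]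
  have h := add_mem
    (add_mem (sq_mul_mem (algebraMap ℝ A k - t) hfr)
      (smul_mem_of_nonneg (by positivity : 0 ≤ 2 * k) htf))
    (add_mem (smul_mem_of_nonneg hr (isSumSq_mul_mem ht ht_le)) htf_le)
  have hscale : k ^ 2 * (r - (k ^ 2)⁻¹) = k ^ 2 * r - 1 := by field_simp
  rw [smul_add, Algebra.algebraMap_eq_smul_one, smul_smul, hscale]
  convert h using 1
  algebra

lemma mem_of_isSumSq_mul_sub_one_mem (hM : IsArchimedeanQuadraticModule M) (ht : IsSumSq t)
    (htf : t * f - 1 ∈ M) : f ∈ M := by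
  obtain ⟨δ, hδ, hstep⟩ := hM.exists_pos_forall_add_algebraMap_sub_mem ht htf
  have hdescent : ∀ (j : ℕ) (r : ℝ), r ≤ j * δ → f + algebraMap ℝ A r ∈ M → f ∈ M := by
    intro j
    induction j with
    | zero =>
      intro r hr hfr
      have h := add_mem hfr (hM.algebraMap_mem (r := -r) (by simpa using hr))
      simpa using h
    | succ j ih =>
      intro r hr hfr
      rcases le_total 0 r with hr0 | hr0
      · exact ih (r - δ) (by push_cast at hr; linarith) (hstep r hr0 hfr)
      · exact ih r (hr0.trans (by positivity)) hfr
  obtain ⟨N, hN⟩ := hM.exists_algebraMap_sub_mem (-f)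
  obtain ⟨j, hj⟩ := exists_nat_ge (N / δ)
  exact hdescent j N ((div_le_iff₀ hδ).1 hj) (by simpa [add_comm] using hN)

/-- The elements that are infinitesimal modulo `M`, encoded by their squares lying below every
positive constant, which makes closure under multiplication immediate. -/
def infinitesimals (hM : IsArchimedeanQuadraticModule M) : Ideal A where
  carrier := {a | ∀ ε : ℝ, 0 < ε → algebraMap ℝ A ε - a ^ 2 ∈ M}
  zero_mem' ε hε := by simpa using hM.algebraMap_mem hε.le
  add_mem' {a b} ha hb ε hε := by
    have h := add_mem (smul_mem_of_nonneg two_pos.le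
      (add_mem (ha (ε / 4) (by positivity)) (hb (ε / 4) (by positivity)))) (hM.sq_mem (a - b))
    convert h using 1
    algebra
  smul_mem' b a ha ε hε := by
    obtain ⟨N, hN, hb⟩ := hM.exists_pos_algebraMap_sub_mem (b ^ 2)
    obtain ⟨δ, hδ, rfl⟩ : ∃ δ : ℝ, 0 < δ ∧ δ * N = ε := ⟨ε / N, by positivity, by field_simp⟩
    have h := add_mem (sq_mul_mem b (ha δ hδ)) (smul_mem_of_nonneg hδ.le hb)
    rw [smul_eq_mul]
    convert h using 1
    algebra

lemma mem_infinitesimals_iff (hM : IsArchimedeanQuadraticModule M) :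
    a ∈ hM.infinitesimals ↔
      ∀ ε : ℝ, 0 < ε → algebraMap ℝ A ε - a ∈ M ∧ algebraMap ℝ A ε + a ∈ M := by
  have of_sq {a : A} {ε : ℝ} (hε : 0 < ε) (ha : algebraMap ℝ A (ε ^ 2) - a ^ 2 ∈ M) :
      algebraMap ℝ A ε - a ∈ M := by
    rw [← smul_mem_iff_of_pos (by positivity : 0 < 2 * ε)]
    convert add_mem ha (hM.sq_mem (algebraMap ℝ A ε - a)) using 1
    algebra
  refine ⟨fun h ε hε => ⟨of_sq hε (h _ (by positivity)), ?_⟩, fun h ε hε => ?_⟩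
  · simpa using of_sq (a := -a) hε (by simpa using h _ (pow_pos hε 2))
  · obtain ⟨δ, hδ, rfl⟩ : ∃ δ : ℝ, 0 < δ ∧ δ ^ 2 = ε :=
      ⟨√ε, Real.sqrt_pos.2 hε, Real.sq_sqrt hε.le⟩
    obtain ⟨hsub, hadd⟩ := h δ hδ
    rw [← smul_mem_iff_of_pos (by positivity : 0 < 2 * δ)]
    convert add_mem (sq_mul_mem (algebraMap ℝ A δ + a) hsub)
      (sq_mul_mem (algebraMap ℝ A δ - a) hadd) using 1
    algebra

lemma infinitesimals_ne_top (hM : IsArchimedeanQuadraticModule M) (h : -1 ∉ M) :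
    hM.infinitesimals ≠ ⊤ := by
  intro htop
  have hone : (1 : A) ∈ hM.infinitesimals := htop ▸ Submodule.mem_top
  have hmem : algebraMap ℝ A (-(1 / 2)) ∈ M := by
    convert hone (1 / 2) (by norm_num) using 1
    algebra
  linarith [nonneg_of_algebraMap_mem h hmem]

lemma exists_sub_algebraMap_mem_infinitesimals (hM : IsArchimedeanQuadraticModule M) (h : -1 ∉ M)
    (htotal : ∀ a, a ∈ M ∨ -a ∈ M) (a : A) : ∃ r, a - algebraMap ℝ A r ∈ hM.infinitesimals := by
  let U : Set ℝ := {r | algebraMap ℝ A r - a ∈ M}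
  have hU_nonempty : U.Nonempty := hM.exists_algebraMap_sub_mem a
  have hU_bdd : BddBelow U := by
    obtain ⟨N, hN⟩ := hM.exists_algebraMap_sub_mem (-a)
    refine ⟨-N, fun r hr => ?_⟩
    have hsum : algebraMap ℝ A (r + N) ∈ M := by simpa using add_mem hr hN
    linarith [nonneg_of_algebraMap_mem h hsum]
  refine ⟨sInf U, hM.mem_infinitesimals_iff.2 fun ε hε => ⟨?_, ?_⟩⟩
  · obtain ⟨r, hr, hlt⟩ := exists_lt_of_csInf_lt hU_nonempty (lt_add_of_pos_right (sInf U) hε)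
    convert hM.algebraMap_sub_mem_of_le hlt.le hr using 1
    algebra
  · rcases htotal (algebraMap ℝ A (sInf U - ε) - a) with hlow | hlow
    · linarith [csInf_le hU_bdd hlow]
    · convert hlow using 1
      algebra

lemma exists_algHom_sub_mem_infinitesimals (hM : IsArchimedeanQuadraticModule M) (h : -1 ∉ M)
    (htotal : ∀ a, a ∈ M ∨ -a ∈ M) :
    ∃ φ : A →ₐ[ℝ] ℝ, ∀ a, a - algebraMap ℝ A (φ a) ∈ hM.infinitesimals := by
  have : Nontrivial (A ⧸ hM.infinitesimals) :=
    Ideal.Quotient.nontrivial_iff.2 (hM.infinitesimals_ne_top h)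
  have hbij : Function.Bijective (Algebra.ofId ℝ (A ⧸ hM.infinitesimals)) := by
    refine ⟨(algebraMap ℝ _).injective, fun y => ?_⟩
    obtain ⟨a, rfl⟩ := Ideal.Quotient.mk_surjective y
    obtain ⟨r, hr⟩ := hM.exists_sub_algebraMap_mem_infinitesimals h htotal a
    exact ⟨r, (Ideal.Quotient.eq.2 hr).symm⟩
  let e : ℝ ≃ₐ[ℝ] A ⧸ hM.infinitesimals := AlgEquiv.ofBijective _ hbij
  refine ⟨e.symm.toAlgHom.comp (Ideal.Quotient.mkₐ ℝ _), fun a => Ideal.Quotient.eq.1 ?_⟩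
  exact (e.apply_symm_apply _).symm

lemma exists_algHom_nonneg_of_total (hM : IsArchimedeanQuadraticModule M) (h : -1 ∉ M)
    (htotal : ∀ a, a ∈ M ∨ -a ∈ M) : ∃ φ : A →ₐ[ℝ] ℝ, ∀ p ∈ M, 0 ≤ φ p := by
  obtain ⟨φ, hφ⟩ := hM.exists_algHom_sub_mem_infinitesimals h htotal
  refine ⟨φ, fun p hp => le_of_forall_pos_le_add fun ε hε => ?_⟩
  have hclose := (hM.mem_infinitesimals_iff.1 (hφ p) ε hε).1
  refine nonneg_of_algebraMap_mem h ?_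
  convert add_mem hclose hp using 1
  algebra

theorem exists_algHom_nonneg (hM : IsArchimedeanQuadraticModule M) (h : -1 ∉ M) :
    ∃ φ : A →ₐ[ℝ] ℝ, ∀ p ∈ M, 0 ≤ φ p := by
  obtain ⟨P, hMP, hmax⟩ := exists_maximal_notMem h
  have hP := hM.mono hMP
  obtain ⟨φ, hφ⟩ := hP.exists_algHom_nonneg_of_total hmax.prop (hP.mem_or_neg_mem_of_maximal hmax)
  exact ⟨φ, fun p hp => hφ p (hMP hp)⟩

theorem mem_of_forall_algHom_pos (hM : IsArchimedeanQuadraticModule M)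
    (hf : ∀ φ : A →ₐ[ℝ] ℝ, (∀ p ∈ M, 0 ≤ φ p) → 0 < φ f) : f ∈ M := by
  by_contra hfM
  have hproper : -1 ∉ M ⊔ Submodule.span (Subsemiring.sumSq A) {-f} := by
    rw [mem_sup_span_singleton_iff]
    rintro ⟨q, hq, t, ht, e⟩
    refine hfM (hM.mem_of_isSumSq_mul_sub_one_mem ht ?_)
    convert hq using 1
    linear_combination -e
  obtain ⟨φ, hφ⟩ := (hM.mono le_sup_left).exists_algHom_nonneg hproper
  have hφf : 0 ≤ φ (-f) :=
    hφ _ (Submodule.mem_sup_right (Submodule.mem_span_singleton_self (-f)))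
  have hφf' := hf φ fun p hp => hφ p (Submodule.mem_sup_left hp)
  rw [map_neg] at hφf
  linarith

theorem mem_of_forall_eval_pos {σ : Type*}
    {M : Submodule (Subsemiring.sumSq (MvPolynomial σ ℝ)) (MvPolynomial σ ℝ)}
    {f : MvPolynomial σ ℝ} (hM : IsArchimedeanQuadraticModule M)
    (hf : ∀ x : σ → ℝ, (∀ p ∈ M, 0 ≤ eval x p) → 0 < eval x f) : f ∈ M := by
  refine hM.mem_of_forall_algHom_pos fun φ hφ => ?_
  have hφ_eval (p : MvPolynomial σ ℝ) : φ p = eval (φ ∘ X) p := by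
    rw [← aeval_eq_eval, ← aeval_unique]
  simp only [hφ_eval] at hφ ⊢
  exact hf _ hφ

end IsArchimedeanQuadraticModule

section SemialgebraicSets

variable {n m d : ℕ} {g : Fin m → MvPolynomial (Fin n) ℝ} {p f : MvPolynomial (Fin n) ℝ}
  {x : Fin n → ℝ}

lemma isSOS_iff_isSumSq : IsSOS p ↔ IsSumSq p := by
  refine ⟨?_, fun h => ?_⟩
  · rintro ⟨k, q, rfl⟩
    exact IsSumSq.sum_sq _ q
  · induction h with
    | zero => exact ⟨0, 0, by simp⟩
    | sq_add a _ ih =>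
      obtain ⟨k, q, rfl⟩ := ih
      exact ⟨k + 1, Fin.cons a q, by simp [Fin.sum_univ_succ, sq]⟩

/-- The quadratic module `Q(g)` generated by the constraint polynomials, without any restriction on
degrees. -/
noncomputable def quadraticModule (g : Fin m → MvPolynomial (Fin n) ℝ) :
    Submodule (Subsemiring.sumSq (MvPolynomial (Fin n) ℝ)) (MvPolynomial (Fin n) ℝ) :=
  Submodule.span _ (Set.range (gext g))

lemma mem_quadraticModule_iff_exists_mem_Qmod (hp : p.totalDegree ≤ d) :
    p ∈ quadraticModule g ↔ ∃ r, p ∈ Qmod g r d := by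
  rw [quadraticModule, Submodule.mem_span_range_iff_exists_fun]
  constructor
  · rintro ⟨s, rfl⟩
    let D (i : Fin (m + 1)) : ℕ := ((s i : MvPolynomial (Fin n) ℝ) * gext g i).totalDegree
    refine ⟨Finset.univ.sup D, hp, fun i => s i,
      fun i => isSOS_iff_isSumSq.2 (Subsemiring.mem_sumSq.1 (s i).2), fun i => ?_, rfl⟩
    have hD : D i ≤ Finset.univ.sup D := Finset.le_sup (Finset.mem_univ i)
    exact hD.trans (Nat.le_mul_of_pos_left _ two_pos)
  · rintro ⟨r, -, s, hs, -, rfl⟩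
    exact ⟨fun i => ⟨s i, Subsemiring.mem_sumSq.2 (isSOS_iff_isSumSq.1 (hs i))⟩, rfl⟩

lemma isQuadraticModule_quadraticModule : IsQuadraticModule (quadraticModule g) :=
  ⟨Submodule.subset_span ⟨0, rfl⟩⟩

lemma mem_semiSetX_iff_forall_mem_quadraticModule :
    x ∈ semiSetX g ↔ ∀ p ∈ quadraticModule g, 0 ≤ eval x p := by
  refine ⟨fun hx p hp => map_nonneg_of_mem_span (eval x) ?_ hp,
    fun h i => h (g i) (Submodule.subset_span ⟨i.succ, rfl⟩)⟩
  rintro _ ⟨i, rfl⟩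
  cases i using Fin.cases with
  | zero => simp [gext]
  | succ i => exact hx i

lemma vPOP_le_eval (hM : IsArchimedeanQuadraticModule (quadraticModule g)) (hx : x ∈ semiSetX g) :
    vPOP g f ≤ eval x f := by
  obtain ⟨N, hN⟩ := hM.exists_algebraMap_sub_mem (-f)
  refine csInf_le ⟨-N, ?_⟩ ⟨x, hx, rfl⟩
  rintro _ ⟨y, hy, rfl⟩
  have hNy := mem_semiSetX_iff_forall_mem_quadraticModule.1 hy _ hN
  simp only [algebraMap_eq, sub_neg_eq_add, map_add, eval_C] at hNy
  linarith

end SemialgebraicSets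

/-- Asymptotic exactness: if `X` is nonempty and the Archimedean
condition holds (`R² - Σ_k x_k² ∈ Q(g)^{r₀}_2` for some `R` and `r₀`), then for every
`f ∈ ℝ[x]_d` and every `ε > 0` there is a relaxation order `r` such that
`f - (v(f) - ε) ∈ Q(g)^r_d`. -/
theorem stmt8 {n m : ℕ} (g : Fin m → MvPolynomial (Fin n) ℝ) (d : ℕ)
    (hX : (semiSetX g).Nonempty)
    (hArch : ∃ (R : ℝ) (r₀ : ℕ),
      C (R ^ 2) - ∑ k : Fin n, (X k : MvPolynomial (Fin n) ℝ) ^ 2 ∈ Qmod g r₀ 2)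
    (f : MvPolynomial (Fin n) ℝ) (hf : f.totalDegree ≤ d)
    (ε : ℝ) (hε : 0 < ε) :
    ∃ r : ℕ, f - C (vPOP g f - ε) ∈ Qmod g r d := by
  obtain ⟨R, r₀, hR⟩ := hArch
  have hball := (mem_quadraticModule_iff_exists_mem_Qmod hR.1).2 ⟨r₀, hR⟩
  have hM : IsArchimedeanQuadraticModule (quadraticModule g) :=
    isQuadraticModule_quadraticModule.isArchimedean_of_algebraMap_sub_sum_sq_mem
      adjoin_range_X hball
  have hdeg : (f - C (vPOP g f - ε)).totalDegree ≤ d :=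
    (totalDegree_sub_C_le f _).trans hf
  refine (mem_quadraticModule_iff_exists_mem_Qmod hdeg).1 (hM.mem_of_forall_eval_pos fun x hx => ?_)
  have hv : vPOP g f ≤ eval x f :=
    vPOP_le_eval hM (mem_semiSetX_iff_forall_mem_quadraticModule.2 hx)
  simp only [map_sub, eval_C]
  linarith
end
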